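/- There exists T > 0, depending only on 𝒥, ℛ, (ā_r)_{r∈ℛ}, and C, such that every fluid model solution x with ‖x(0)‖₁ = 1 satisfies x_{jr}(t) = 0 for all (j,r) ∈ E and all t ≥ T. (Fluid stability of the Proportional Scheduler in multihop networks with fixed routing.) -/

import Mathlib

open MeasureTheory
open scoped Classical

/-- Per-link queue sizes `q j = ∑_{r ∋ j} x j r`, where route `r` consists of
the links `link r 0, …, link r (K r - 1)`. -/
noncomputable def qOf {J R : Type} [Fintype R] (K : R → ℕ) (link : R → ℕ → J)
    (x : J → R → ℝ) (j : J) : ℝ :=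
  ∑ r ∈ Finset.univ.filter (fun r => ∃ k < K r, link r k = j), x j r

open Filter Topology

lemma dini_bound_aux {g : ℝ → ℝ} {a b c : ℝ} (hab : a ≤ b)
    (hlsc : LowerSemicontinuousOn g (Set.Icc a b))
    (hfin : ∀ t ∈ Set.Ico a b, ∃ m : ℝ, ∀ᶠ u in 𝓝[>] t, g u - g t ≤ (u - t) * m)
    (hae : ∀ᵐ t : ℝ, t ∈ Set.Ico a b → ∀ᶠ u in 𝓝[>] t, g u - g t ≤ (u - t) * c) :
    g b - g a ≤ (b - a) * c := by
  have hm : ∃ φ : ℝ → ℝ, φ =ᵐ[volume] (fun _ => c) ∧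
      ∀ t ∈ Set.Ico a b, ∀ᶠ u in 𝓝[>] t, g u - g t ≤ (u - t) * φ t := by
    choose! m hm using hfin
    refine ⟨fun t => if (∀ᶠ u in 𝓝[>] t, g u - g t ≤ (u - t) * c) ∨ t ∉ Set.Ico a b then c
      else m t, ?_, ?_⟩
    · filter_upwards [hae] with t ht
      by_cases h : t ∈ Set.Ico a b
      · rw [if_pos (Or.inl (ht h))]
      · rw [if_pos (Or.inr h)]
    · intro t ht
      by_cases h : ∀ᶠ u in 𝓝[>] t, g u - g t ≤ (u - t) * c
      · simp only [if_pos (Or.inl h : _ ∨ t ∉ Set.Ico a b)]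
        exact h
      · have : ¬ ((∀ᶠ u in 𝓝[>] t, g u - g t ≤ (u - t) * c) ∨ t ∉ Set.Ico a b) := by
          tauto
        simp only [if_neg this]
        exact hm t ht
  obtain ⟨φ, hφae, hφ⟩ := hm
  have φint : IntegrableOn φ (Set.Icc a b) := by
    have h1 : IntegrableOn (fun _ : ℝ => c) (Set.Icc a b) := by simp
    exact h1.congr (ae_restrict_of_ae hφae.symm)
  have hφI : ∫ y in Set.Icc a b, φ y = (b - a) * c := by
    rw [integral_congr_ae (ae_restrict_of_ae hφae)]
    simp [hab]
  refine le_of_forall_pos_le_add fun ε εpos => ?_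
  rcases exists_lt_lowerSemicontinuous_integral_lt φ φint εpos with
    ⟨G', f_lt_G', G'cont, G'int, G'lt_top, hG'⟩
  set s := {t | g t - g a ≤ ∫ u in a..t, (G' u).toReal} ∩ Set.Icc a b
  have hFc : ContinuousOn (fun t => ∫ u in a..t, (G' u).toReal) (Set.Icc a b) := by
    rw [← Set.uIcc_of_le hab] at G'int ⊢
    exact intervalIntegral.continuousOn_primitive_interval G'int
  have s_closed : IsClosed s := by
    apply isClosed_of_closure_subset
    intro t ht
    have htI : t ∈ Set.Icc a b :=
      (closure_minimal (Set.inter_subset_right) isClosed_Icc) ht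
    refine ⟨?_, htI⟩
    by_contra hcon
    simp only [Set.mem_ofPred_eq, not_le] at hcon
    obtain ⟨y, hy1, hy2⟩ := exists_between hcon
    have hne : (𝓝[s] t).NeBot := mem_closure_iff_nhdsWithin_neBot.1 ht
    have hle : 𝓝[s] t ≤ 𝓝[Set.Icc a b] t := nhdsWithin_mono _ Set.inter_subset_right
    have e1 : ∀ᶠ u in 𝓝[s] t, y + g a < g u := hle (hlsc t htI (y + g a) (by linarith))
    have e2 : ∀ᶠ u in 𝓝[s] t, ∫ w in a..u, (G' w).toReal < y :=
      hle ((hFc t htI).eventually (gt_mem_nhds hy1))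
    have e3 : ∀ᶠ u in 𝓝[s] t, u ∈ s := self_mem_nhdsWithin
    obtain ⟨u, h1, h2, h3⟩ := (e1.and (e2.and e3)).exists
    have h4 : g u - g a ≤ ∫ u in a..u, (G' u).toReal := h3.1
    linarith
  have main : Set.Icc a b ⊆ {t | g t - g a ≤ ∫ u in a..t, (G' u).toReal} := by
    refine s_closed.Icc_subset_of_forall_exists_gt
      (by simp) fun t ht v t_lt_v => ?_
    obtain ⟨y, g'_lt_y', y_lt_G'⟩ : ∃ y : ℝ, (φ t : EReal) < y ∧ (y : EReal) < G' t :=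
      EReal.lt_iff_exists_real_btwn.1 (f_lt_G' t)
    have I1 : ∀ᶠ u in 𝓝[>] t, (u - t) * y ≤ ∫ w in t..u, (G' w).toReal := by
      have B : ∀ᶠ u in 𝓝 t, (y : EReal) < G' u := G'cont.lowerSemicontinuousAt _ _ y_lt_G'
      rcases mem_nhds_iff_exists_Ioo_subset.1 B with ⟨m, M, ⟨hm, hM⟩, H⟩
      have : Set.Ioo t (min M b) ∈ 𝓝[>] t := Ioo_mem_nhdsGT (lt_min hM ht.right.right)
      filter_upwards [this] with u hu
      have I : Set.Icc t u ⊆ Set.Icc a b :=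
        Set.Icc_subset_Icc ht.2.1 (hu.2.le.trans (min_le_right _ _))
      calc
        (u - t) * y = ∫ _ in Set.Icc t u, y := by
          simp only [MeasureTheory.integral_const, MeasurableSet.univ, measureReal_restrict_apply,
            Set.univ_inter, hu.left.le, Real.volume_real_Icc_of_le, smul_eq_mul]
        _ ≤ ∫ w in t..u, (G' w).toReal := by
          rw [intervalIntegral.integral_of_le hu.1.le, ← integral_Icc_eq_integral_Ioc]
          apply setIntegral_mono_ae_restrict
          · simp
          · exact IntegrableOn.mono_set G'int I
          · have C1 : ∀ᵐ x : ℝ ∂volume.restrict (Set.Icc t u), G' x < ⊤ :=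
              ae_mono (Measure.restrict_mono I le_rfl) G'lt_top
            have C2 : ∀ᵐ x : ℝ ∂volume.restrict (Set.Icc t u), x ∈ Set.Icc t u :=
              ae_restrict_mem measurableSet_Icc
            filter_upwards [C1, C2] with x G'x hx
            apply EReal.coe_le_coe_iff.1
            have : x ∈ Set.Ioo m M :=
              ⟨hm.trans_le hx.left, (hx.right.trans_lt hu.right).trans_le (min_le_left M b)⟩
            have h5 : (y : EReal) < G' x := H this
            refine h5.le.trans_eq ?_
            exact (EReal.coe_toReal G'x.ne (f_lt_G' x).ne_bot).symm
    have I2 : ∀ᶠ u in 𝓝[>] t, g u - g t ≤ (u - t) * y := by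
      have g'_lt_y : φ t < y := EReal.coe_lt_coe_iff.1 g'_lt_y'
      filter_upwards [hφ t ⟨ht.2.1, ht.2.2⟩, self_mem_nhdsWithin] with u hu t_lt_u
      have h6 : t < u := t_lt_u
      exact hu.trans (mul_le_mul_of_nonneg_left g'_lt_y.le (by linarith))
    have I3 : ∀ᶠ u in 𝓝[>] t, g u - g t ≤ ∫ w in t..u, (G' w).toReal := by
      filter_upwards [I1, I2] with u hu1 hu2 using hu2.trans hu1
    have I4 : ∀ᶠ u in 𝓝[>] t, u ∈ Set.Ioc t (min v b) := Ioc_mem_nhdsGT <| lt_min t_lt_v ht.2.2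
    rcases (I3.and I4).exists with ⟨x, hx, h'x⟩
    refine ⟨x, ?_, Set.Ioc_subset_Ioc le_rfl (min_le_left _ _) h'x⟩
    have h7 : g t - g a ≤ ∫ u in a..t, (G' u).toReal := ht.1
    calc
      g x - g a = g t - g a + (g x - g t) := by abel
      _ ≤ (∫ w in a..t, (G' w).toReal) + ∫ w in t..x, (G' w).toReal := add_le_add h7 hx
      _ = ∫ w in a..x, (G' w).toReal := by
        apply intervalIntegral.integral_add_adjacent_intervals
        · rw [intervalIntegrable_iff_integrableOn_Ioc_of_le ht.2.1]
          exact IntegrableOn.mono_set G'int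
            (Set.Ioc_subset_Icc_self.trans (Set.Icc_subset_Icc le_rfl ht.2.2.le))
        · rw [intervalIntegrable_iff_integrableOn_Ioc_of_le h'x.1.le]
          apply IntegrableOn.mono_set G'int
          exact Set.Ioc_subset_Icc_self.trans
            (Set.Icc_subset_Icc ht.2.1 (h'x.2.trans (min_le_right _ _)))
  have h8 : g b - g a ≤ ∫ y in a..b, (G' y).toReal := main (Set.right_mem_Icc.2 hab)
  rw [intervalIntegral.integral_of_le hab, ← integral_Icc_eq_integral_Ioc] at h8
  rw [hφI] at hG'
  linarith

lemma dini_bound {g : ℝ → ℝ} {a b c : ℝ} (hab : a ≤ b)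
    (hlsc : LowerSemicontinuousOn g (Set.Icc a b))
    (hfin : ∀ t ∈ Set.Ico a b, ∃ m : ℝ, ∀ᶠ u in 𝓝[>] t, g u - g t ≤ (u - t) * m)
    (hae : ∀ᵐ t : ℝ, t ∈ Set.Ico a b → ∀ c' > c, ∀ᶠ u in 𝓝[>] t, g u - g t ≤ (u - t) * c') :
    g b - g a ≤ (b - a) * c := by
  have key : ∀ c' > c, g b - g a ≤ (b - a) * c' := fun c' hc' =>
    dini_bound_aux hab hlsc hfin (by filter_upwards [hae] with t h1 h2 using h1 h2 c' hc')
  have lim : Tendsto (fun c' : ℝ => (b - a) * c') (𝓝[>] c) (𝓝 ((b - a) * c)) :=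
    tendsto_nhdsWithin_of_tendsto_nhds (tendsto_id.const_mul _)
  exact ge_of_tendsto lim (by filter_upwards [self_mem_nhdsWithin] with c' hc' using key c' hc')

/-- one step of the entropy chain -/
lemma chain_step {a b : ℝ} (ha : 0 < a) (hb : 0 < b) :
    (a - b) * Real.log b ≤ (a * Real.log a - a) - (b * Real.log b - b) - (√a - √b) ^ 2 := by
  have h1 : Real.log (√b / √a) ≤ √b / √a - 1 :=
    Real.log_le_sub_one_of_pos (div_pos (Real.sqrt_pos.2 hb) (Real.sqrt_pos.2 ha))
  rw [Real.log_div (Real.sqrt_pos.2 hb).ne' (Real.sqrt_pos.2 ha).ne', Real.log_sqrt hb.le,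
    Real.log_sqrt ha.le] at h1
  have e1 : √a ^ 2 = a := Real.sq_sqrt ha.le
  have e2 : √b ^ 2 = b := Real.sq_sqrt hb.le
  have h2 := mul_le_mul_of_nonneg_left h1 ha.le
  have e3 : a * (√b / √a - 1) = √a * √b - a := by
    have := (Real.sqrt_pos.2 ha).ne'
    nth_rewrite 1 [← e1]
    field_simp
    rw [mul_sub, Real.mul_self_sqrt ha.le]
  rw [e3] at h2
  rw [sub_sq, e1, e2]
  nlinarith

/-- The chain bound: `u 0 = 1`, all positive, some `u k ≥ 1 + ε`. -/
lemma chain_bound (K : ℕ) (u : ℕ → ℝ) (h0 : u 0 = 1) (hpos : ∀ k ≤ K, 0 < u k) :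
    ∑ k ∈ Finset.range K, (u k - u (k+1)) * Real.log (u (k+1)) ≤
      - ∑ k ∈ Finset.range K, (√(u k) - √(u (k+1))) ^ 2 := by
  have h1 : ∑ k ∈ Finset.range K, (u k - u (k+1)) * Real.log (u (k+1)) ≤
      ∑ k ∈ Finset.range K, (((u k * Real.log (u k) - u k) -
        (u (k+1) * Real.log (u (k+1)) - u (k+1))) - (√(u k) - √(u (k+1))) ^ 2) := by
    apply Finset.sum_le_sum
    intro k hk
    rw [Finset.mem_range] at hk
    exact chain_step (hpos k hk.le) (hpos (k+1) hk)
  rw [Finset.sum_sub_distrib, Finset.sum_range_sub' (fun k => u k * Real.log (u k) - u k)] at h1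
  rw [h0] at h1
  have h2 : -1 ≤ u K * Real.log (u K) - u K := by
    have hp := hpos K le_rfl
    have := Real.one_sub_inv_le_log_of_pos hp
    have h3 := mul_le_mul_of_nonneg_left this hp.le
    rw [mul_sub, mul_inv_cancel₀ hp.ne'] at h3
    linarith
  simp at h1
  linarith

lemma chain_sq (K : ℕ) (v : ℕ → ℝ) (k : ℕ) (hk : k ≤ K) :
    (v k - v 0) ^ 2 ≤ K * ∑ i ∈ Finset.range K, (v i - v (i+1)) ^ 2 := by
  have e : v 0 - v k = ∑ i ∈ Finset.range k, (v i - v (i+1)) :=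
    (Finset.sum_range_sub' v k).symm
  have h1 := sq_sum_le_card_mul_sum_sq (s := Finset.range k) (f := fun i => v i - v (i+1))
  rw [← e] at h1
  have h2 : ∑ i ∈ Finset.range k, (v i - v (i+1)) ^ 2 ≤ ∑ i ∈ Finset.range K, (v i - v (i+1)) ^ 2 :=
    Finset.sum_le_sum_of_subset_of_nonneg (by simpa using hk) (fun i _ _ => sq_nonneg _)
  have h3 : (0:ℝ) ≤ ∑ i ∈ Finset.range k, (v i - v (i+1)) ^ 2 :=
    Finset.sum_nonneg (fun i _ => sq_nonneg _)
  have hk' : (k:ℝ) ≤ K := by exact_mod_cast hk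
  simp only [Finset.card_range] at h1
  calc (v k - v 0) ^ 2 = (v 0 - v k) ^ 2 := by ring
    _ ≤ k * ∑ i ∈ Finset.range k, (v i - v (i+1)) ^ 2 := h1
    _ ≤ K * ∑ i ∈ Finset.range K, (v i - v (i+1)) ^ 2 := by gcongr

def POpt {J : Type} [Fintype J] (C : Set (J → ℝ)) (q s : J → ℝ) : Prop :=
  s ∈ C ∧ (∀ j, 0 < q j → 0 < s j) ∧
    ∀ s' ∈ C, (∀ j, 0 < q j → 0 < s' j) →
      ∑ j, q j * Real.log (s' j) ≤ ∑ j, q j * Real.log (s j)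

lemma POpt_exists {J : Type} [Fintype J] {C : Set (J → ℝ)} (hc : IsCompact C)
    (hn : ∀ s ∈ C, ∀ j, 0 ≤ s j) (a : J → ℝ) (ha : a ∈ C) (hapos : ∀ j, 0 < a j)
    (q : J → ℝ) (hq : ∀ j, 0 ≤ q j) : ∃ s, POpt C q s := by
  have hcont : Continuous (fun s : J → ℝ => ∏ j, (s j) ^ (q j)) := by
    apply continuous_finsetProd
    intro j _
    exact (continuous_apply j).rpow_const (fun s => Or.inr (hq j))
  obtain ⟨s, hs, hmax⟩ := hc.exists_isMaxOn ⟨a, ha⟩ hcont.continuousOn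
  have key : ∀ v ∈ C, (∀ j, 0 < q j → 0 < v j) →
      0 < ∏ j, (v j) ^ (q j) ∧ Real.log (∏ j, (v j) ^ (q j)) = ∑ j, q j * Real.log (v j) := by
    intro v hv hpos
    have h1 : ∀ j, 0 < (v j) ^ (q j) := by
      intro j
      rcases (hq j).eq_or_lt with h | h
      · rw [← h]; simp
      · exact Real.rpow_pos_of_pos (hpos j h) _
    refine ⟨Finset.prod_pos (fun j _ => h1 j), ?_⟩
    rw [Real.log_prod (fun j _ => (h1 j).ne')]
    apply Finset.sum_congr rfl
    intro j _
    rcases (hq j).eq_or_lt with h | h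
    · rw [← h]; simp
    · exact Real.log_rpow (hpos j h) _
  have hspos : ∀ j, 0 < q j → 0 < s j := by
    intro j hj
    refine lt_of_le_of_ne (hn s hs j) (fun h0 => ?_)
    have h1 : ∏ j, (s j) ^ (q j) = 0 := by
      apply Finset.prod_eq_zero (Finset.mem_univ j)
      rw [← h0]; exact Real.zero_rpow hj.ne'
    have h2 := (key a ha (fun j _ => hapos j)).1
    have h3 : ∏ j, (a j) ^ (q j) ≤ ∏ j, (s j) ^ (q j) := hmax ha
    linarith
  refine ⟨s, hs, hspos, fun s' hs' hpos' => ?_⟩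
  rw [← (key s hs hspos).2, ← (key s' hs' hpos').2]
  exact Real.log_le_log (key s' hs' hpos').1 (hmax hs')

lemma POpt_foc {J : Type} [Fintype J] {C : Set (J → ℝ)} (hconv : Convex ℝ C)
    (hn : ∀ s ∈ C, ∀ j, 0 ≤ s j) {q s : J → ℝ} (hq : ∀ j, 0 ≤ q j) (h : POpt C q s)
    {v : J → ℝ} (hv : v ∈ C) : ∑ j, q j * (v j / s j) ≤ ∑ j, q j := by
  obtain ⟨hs, hpos, hmax⟩ := h
  have step : ∀ θ ∈ Set.Ioo (0:ℝ) 1,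
      ∑ j, q j * ((v j / s j - 1) / (1 + θ * (v j / s j - 1))) ≤ 0 := by
    intro θ hθ
    have hmem : (1 - θ) • s + θ • v ∈ C :=
      hconv hs hv (by linarith [hθ.2]) hθ.1.le (by ring)
    have hp : ∀ j, 0 < q j → 0 < ((1 - θ) • s + θ • v) j := by
      intro j hj
      have h1 := hpos j hj
      have h2 := hn v hv j
      have h3 : 0 < (1 - θ) * s j := mul_pos (by linarith [hθ.2]) h1
      have h4 : 0 ≤ θ * v j := mul_nonneg hθ.1.le h2
      simpa using by linarith
    have h1 := hmax _ hmem hp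
    have h2 : ∑ j, θ * (q j * ((v j / s j - 1) / (1 + θ * (v j / s j - 1)))) ≤
        ∑ j, (q j * Real.log (((1 - θ) • s + θ • v) j) - q j * Real.log (s j)) := by
      apply Finset.sum_le_sum
      intro j _
      rcases (hq j).eq_or_lt with h0 | h0
      · rw [← h0]; simp
      · have hs0 := hpos j h0
        have hm0 := hp j h0
        have e : ((1 - θ) • s + θ • v) j = s j * (1 + θ * (v j / s j - 1)) := by
          simp; field_simp; ring
        rw [e] at hm0 ⊢
        have hw : 0 < 1 + θ * (v j / s j - 1) := by
          by_contra hcon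
          nlinarith
        rw [Real.log_mul hs0.ne' hw.ne']
        have := Real.one_sub_inv_le_log_of_pos hw
        have e2 : θ * ((v j / s j - 1) / (1 + θ * (v j / s j - 1))) =
            1 - (1 + θ * (v j / s j - 1))⁻¹ := by
          generalize v j / s j - 1 = z at *
          field_simp; ring
        calc _ = q j * (θ * ((v j / s j - 1) / (1 + θ * (v j / s j - 1)))) := by ring
          _ ≤ q j * Real.log (1 + θ * (v j / s j - 1)) := by
            rw [e2]; exact mul_le_mul_of_nonneg_left this (hq j)
          _ = _ := by ring
    rw [Finset.sum_sub_distrib, ← Finset.mul_sum] at h2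
    by_contra hcon
    push Not at hcon
    have := mul_pos hθ.1 hcon
    linarith
  have lim : Tendsto (fun θ : ℝ => ∑ j, q j * ((v j / s j - 1) / (1 + θ * (v j / s j - 1))))
      (𝓝[>] 0) (𝓝 (∑ j, q j * ((v j / s j - 1) / (1 + 0 * (v j / s j - 1))))) := by
    apply tendsto_nhdsWithin_of_tendsto_nhds
    apply tendsto_finsetSum
    intro j _
    apply Tendsto.const_mul
    apply Tendsto.div tendsto_const_nhds _ (by simp)
    exact tendsto_const_nhds.add (tendsto_id.mul_const _)
  have := le_of_tendsto lim (by
    filter_upwards [Ioo_mem_nhdsGT (show (0:ℝ) < 1 by norm_num)] with θ hθ using step θ hθ)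
  simp only [zero_mul, add_zero, div_one] at this
  simp only [mul_sub, mul_one, Finset.sum_sub_distrib] at this
  linarith

/-- stability of optimizers -/
lemma POpt_close {J : Type} [Fintype J] {C : Set (J → ℝ)} (hconv : Convex ℝ C)
    (hn : ∀ s ∈ C, ∀ j, 0 ≤ s j) {q s q' s' : J → ℝ} (hq : ∀ j, 0 ≤ q j) (h : POpt C q s)
    (hq' : ∀ j, 0 ≤ q' j) (h' : POpt C q' s') (j : J) (hj : 0 < q j) (hj' : 0 < q' j) :
    (√(q j) * (s' j / s j) - √(q' j)) ^ 2 ≤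
      (∑ i, q i) / q j * ∑ i, (√(q i) - √(q' i)) ^ 2 := by
  have f1 := POpt_foc hconv hn hq h h'.1
  have f2 := POpt_foc hconv hn hq' h' h.1
  have hn1 := hn s h.1
  have hn2 := hn s' h'.1
  have sj := h.2.1 j hj
  have sj' := h'.2.1 j hj'
  have term : ∀ i, 0 ≤ q i * (s' i / s i) + q' i * (s i / s' i) - 2 * (√(q i) * √(q' i)) := by
    intro i
    rcases (hq i).eq_or_lt with h0 | h0
    · rw [← h0]; simp
      exact mul_nonneg (hq' i) (div_nonneg (hn1 i) (hn2 i))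
    rcases (hq' i).eq_or_lt with h0' | h0'
    · rw [← h0']; simp
      exact mul_nonneg (hq i) (div_nonneg (hn2 i) (hn1 i))
    have a1 := h.2.1 i h0
    have a2 := h'.2.1 i h0'
    have e1 : q i = √(q i) ^ 2 := (Real.sq_sqrt (hq i)).symm
    have e2 : q' i = √(q' i) ^ 2 := (Real.sq_sqrt (hq' i)).symm
    have : √(q i) ^ 2 * (s' i / s i) + √(q' i) ^ 2 * (s i / s' i) - 2 * (√(q i) * √(q' i)) =
        (√(q i) * s' i - √(q' i) * s i) ^ 2 / (s i * s' i) := by field_simp; ring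
    rw [e1, e2, Real.sqrt_sq (Real.sqrt_nonneg _), Real.sqrt_sq (Real.sqrt_nonneg _), this]
    positivity
  have hsum : ∑ i, (q i * (s' i / s i) + q' i * (s i / s' i) - 2 * (√(q i) * √(q' i))) ≤
      ∑ i, (√(q i) - √(q' i)) ^ 2 := by
    have : ∑ i, (√(q i) - √(q' i)) ^ 2 = ∑ i, q i + ∑ i, q' i - ∑ i, 2 * (√(q i) * √(q' i)) := by
      rw [← Finset.sum_add_distrib, ← Finset.sum_sub_distrib]
      apply Finset.sum_congr rfl
      intro i _
      have e1 : √(q i) ^ 2 = q i := (Real.sq_sqrt (hq i))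
      have e2 : √(q' i) ^ 2 = q' i := (Real.sq_sqrt (hq' i))
      rw [sub_sq, e1, e2]; ring
    rw [this, Finset.sum_sub_distrib, Finset.sum_add_distrib]
    linarith
  have hsingle := (Finset.single_le_sum (fun i _ => term i) (Finset.mem_univ j)).trans hsum
  have hw : s' j / s j ≤ (∑ i, q i) / q j := by
    rw [le_div_iff₀ hj, mul_comm]
    refine le_trans ?_ f1
    exact Finset.single_le_sum (f := fun i => q i * (s' i / s i))
      (fun i _ => mul_nonneg (hq i) (div_nonneg (hn2 i) (hn1 i))) (Finset.mem_univ j)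
  have hw0 : 0 < s' j / s j := div_pos sj' sj
  have e : (√(q j) * (s' j / s j) - √(q' j)) ^ 2 = (s' j / s j) *
      (q j * (s' j / s j) + q' j * (s j / s' j) - 2 * (√(q j) * √(q' j))) := by
    have e1 : √(q j) ^ 2 = q j := (Real.sq_sqrt (hq j))
    have e2 : √(q' j) ^ 2 = q' j := (Real.sq_sqrt (hq' j))
    rw [sub_sq, mul_pow, e1, e2]
    field_simp
    ring
  rw [e]
  have hpos : 0 ≤ ∑ i, (√(q i) - √(q' i)) ^ 2 := Finset.sum_nonneg (fun i _ => sq_nonneg _)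
  calc _ ≤ (s' j / s j) * ∑ i, (√(q i) - √(q' i)) ^ 2 :=
        mul_le_mul_of_nonneg_left hsingle hw0.le
    _ ≤ _ := mul_le_mul_of_nonneg_right hw hpos

lemma POpt_unique {J : Type} [Fintype J] {C : Set (J → ℝ)} (hconv : Convex ℝ C)
    (hn : ∀ s ∈ C, ∀ j, 0 ≤ s j) {q s s' : J → ℝ} (hq : ∀ j, 0 ≤ q j) (h : POpt C q s)
    (h' : POpt C q s') (j : J) (hj : 0 < q j) : s' j = s j := by
  have := POpt_close hconv hn hq h hq h' j hj hj
  simp only [sub_self, ne_eq, OfNat.ofNat_ne_zero, not_false_eq_true, zero_pow,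
    Finset.sum_const_zero, mul_zero] at this
  have h0 : √(q j) * (s' j / s j) - √(q j) = 0 := by
    have := le_antisymm this (sq_nonneg _)
    exact pow_eq_zero_iff (two_ne_zero) |>.1 this
  have hs := h.2.1 j hj
  have hq0 := Real.sqrt_pos.2 hj
  have h1 : √(q j) * (s' j / s j - 1) = 0 := by linarith
  rcases mul_eq_zero.1 h1 with h2 | h2
  · linarith
  · field_simp at h2; linarith

lemma POpt_tendsto {J α : Type} [Fintype J] {C : Set (J → ℝ)} (hconv : Convex ℝ C)
    (hn : ∀ s ∈ C, ∀ j, 0 ≤ s j) {q s : J → ℝ} (hq : ∀ j, 0 ≤ q j) (h : POpt C q s)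
    (l : Filter α) (q' s' : α → J → ℝ) (hq' : ∀ᶠ u in l, ∀ j, 0 ≤ q' u j)
    (h' : ∀ᶠ u in l, POpt C (q' u) (s' u)) (hlim : ∀ j, Tendsto (fun u => q' u j) l (𝓝 (q j)))
    (j : J) (hj : 0 < q j) : Tendsto (fun u => s' u j) l (𝓝 (s j)) := by
  have hs := h.2.1 j hj
  have hq0 := Real.sqrt_pos.2 hj
  have hsq : ∀ i, Tendsto (fun u => √(q' u i)) l (𝓝 (√(q i))) := fun i => (hlim i).sqrt
  have hR : Tendsto (fun u => (∑ i, q i) / q j * ∑ i, (√(q i) - √(q' u i)) ^ 2) l (𝓝 0) := by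
    have : Tendsto (fun u => (∑ i, q i) / q j * ∑ i, (√(q i) - √(q' u i)) ^ 2) l
        (𝓝 ((∑ i, q i) / q j * ∑ i, (√(q i) - √(q i)) ^ 2)) := by
      apply Tendsto.const_mul
      apply tendsto_finsetSum
      intro i _
      exact (tendsto_const_nhds.sub (hsq i)).pow 2
    simpa using this
  have hS : Tendsto (fun u => (√(q j) * (s' u j / s j) - √(q' u j)) ^ 2) l (𝓝 0) := by
    apply tendsto_of_tendsto_of_tendsto_of_le_of_le' tendsto_const_nhds hR
    · exact Eventually.of_forall (fun u => sq_nonneg _)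
    · filter_upwards [hq', h', (hlim j).eventually (lt_mem_nhds hj)] with u h1 h2 h3
      exact POpt_close hconv hn hq h h1 h2 j hj h3
  have hA : Tendsto (fun u => √(q j) * (s' u j / s j) - √(q' u j)) l (𝓝 0) := by
    have := hS.sqrt
    simp only [Real.sqrt_sq_eq_abs, Real.sqrt_zero] at this
    exact (tendsto_zero_iff_abs_tendsto_zero _).2 this
  have hB := (hA.add (hsq j)).mul_const (s j / √(q j))
  have e : (0 + √(q j)) * (s j / √(q j)) = s j := by field_simp; ring
  rw [e] at hB
  refine hB.congr (fun u => ?_)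
  field_simp
  ring

/-- Static network data bundled together with a selection of optimizers. -/
structure NetData (J R : Type) [Fintype J] [Fintype R] where
  In : J → Finset R
  a : R → ℝ
  C : Set (J → ℝ)
  S : (J → ℝ) → J → ℝ
  B : ℝ
  β : ℝ
  ε : ℝ
  In_ne : ∀ j, (In j).Nonempty
  a_pos : ∀ r, 0 < a r
  conv : Convex ℝ C
  nonneg : ∀ s ∈ C, ∀ j, 0 ≤ s j
  le_B : ∀ s ∈ C, ∀ j, s j ≤ B
  hβ0 : 0 ≤ β
  hβ : ∀ r D, 0 ≤ D → D ≤ B → Real.log (D / a r) ≤ β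
  hε : 0 < ε
  aC : (fun j => ∑ r ∈ In j, a r) ∈ C
  aC' : (fun j => ∑ r ∈ In j, (1 + ε) * a r) ∈ C
  hS : ∀ q : J → ℝ, (∀ j, 0 ≤ q j) → POpt C q (S q)

namespace NetData

variable {J R : Type} [Fintype J] [Fintype R] (N : NetData J R)

noncomputable def Q (x : J → R → ℝ) (j : J) : ℝ := ∑ r ∈ N.In j, x j r

noncomputable def D (x : J → R → ℝ) (j : J) (r : R) : ℝ :=
  (if 0 < N.Q x j then x j r / N.Q x j else N.a r / ∑ r ∈ N.In j, N.a r) * N.S (N.Q x) j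

noncomputable def H (x : J → R → ℝ) : ℝ :=
  ∑ j, ∑ r ∈ N.In j, x j r * Real.log (N.D x j r / N.a r)

def NN (x : J → R → ℝ) : Prop := ∀ j, ∀ r ∈ N.In j, 0 ≤ x j r

variable {N}

lemma Q_nonneg {x : J → R → ℝ} (hx : N.NN x) (j : J) : 0 ≤ N.Q x j :=
  Finset.sum_nonneg (fun r hr => hx j r hr)

lemma Q_pos {x : J → R → ℝ} (hx : N.NN x) {j : J} {r : R} (hr : r ∈ N.In j) (h : 0 < x j r) :
    0 < N.Q x j :=
  lt_of_lt_of_le h (Finset.single_le_sum (f := fun r => x j r) (fun r hr => hx j r hr) hr)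

lemma asum_pos (j : J) : 0 < ∑ r ∈ N.In j, N.a r :=
  Finset.sum_pos (fun r _ => N.a_pos r) (N.In_ne j)

lemma S_opt {x : J → R → ℝ} (hx : N.NN x) : POpt N.C (N.Q x) (N.S (N.Q x)) :=
  N.hS _ (Q_nonneg hx)

lemma D_nonneg {x : J → R → ℝ} (hx : N.NN x) {j : J} {r : R} (hr : r ∈ N.In j) :
    0 ≤ N.D x j r := by
  unfold D
  apply mul_nonneg _ (N.nonneg _ (S_opt hx).1 j)
  split_ifs with h
  · exact div_nonneg (hx j r hr) h.le
  · exact div_nonneg (N.a_pos r).le (asum_pos j).le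

lemma D_pos {x : J → R → ℝ} (hx : N.NN x) {j : J} {r : R} (hr : r ∈ N.In j) (h : 0 < x j r) :
    0 < N.D x j r := by
  unfold D
  have := Q_pos hx hr h
  rw [if_pos this]
  exact mul_pos (div_pos h this) ((S_opt hx).2.1 j this)

lemma D_sum {x : J → R → ℝ} (j : J) : ∑ r ∈ N.In j, N.D x j r = N.S (N.Q x) j := by
  unfold D
  rw [← Finset.sum_mul]
  split_ifs with h
  · rw [← Finset.sum_div]
    have : ∑ r ∈ N.In j, x j r = N.Q x j := rfl
    rw [this, div_self h.ne', one_mul]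
  · rw [← Finset.sum_div, div_self (asum_pos j).ne', one_mul]

lemma D_le {x : J → R → ℝ} (hx : N.NN x) {j : J} {r : R} (hr : r ∈ N.In j) :
    N.D x j r ≤ N.B := by
  refine le_trans ?_ (N.le_B _ (S_opt hx).1 j)
  rw [← D_sum j]
  exact Finset.single_le_sum (f := fun r => N.D x j r) (fun r hr => D_nonneg hx hr) hr

/-- variational lower bound -/
lemma H_ge {x : J → R → ℝ} (hx : N.NN x) (E : J → R → ℝ)
    (hE0 : ∀ j, ∀ r ∈ N.In j, 0 ≤ E j r)
    (hE : ∀ j, ∀ r ∈ N.In j, 0 < x j r → 0 < E j r)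
    (hEC : (fun j => ∑ r ∈ N.In j, E j r) ∈ N.C) :
    ∑ j, ∑ r ∈ N.In j, x j r * Real.log (E j r / N.a r) ≤ N.H x := by
  set σ : J → ℝ := fun j => ∑ r ∈ N.In j, E j r with hσ
  have hσpos : ∀ j, ∀ r ∈ N.In j, 0 < x j r → 0 < σ j := by
    intro j r hr h
    exact lt_of_lt_of_le (hE j r hr h)
      (Finset.single_le_sum (f := fun r => E j r) (fun r hr => hE0 j r hr) hr)
  have hσ0 : ∀ j, 0 ≤ σ j := fun j => Finset.sum_nonneg (fun r hr => hE0 j r hr)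
  have hσq : ∀ j, 0 < N.Q x j → 0 < σ j := by
    intro j hj
    by_contra hcon
    have h0 : ∀ r ∈ N.In j, x j r = 0 := by
      intro r hr
      by_contra h1
      exact hcon (hσpos j r hr (lt_of_le_of_ne (hx j r hr) (Ne.symm h1)))
    have : N.Q x j = 0 := Finset.sum_eq_zero h0
    linarith
  have hopt := (S_opt hx).2.2 σ hEC hσq
  have pt : ∀ j, ∀ r ∈ N.In j, x j r * Real.log (E j r / N.a r) ≤
      x j r * Real.log (N.D x j r / N.a r) +
      (x j r * Real.log (σ j) - x j r * Real.log (N.S (N.Q x) j)) +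
      (N.Q x j * (E j r / σ j) - x j r) := by
    intro j r hr
    rcases (hx j r hr).eq_or_lt with h0 | h0
    · rw [← h0]
      have := mul_nonneg (Q_nonneg hx j) (div_nonneg (hE0 j r hr) (hσ0 j))
      simpa using this
    · have hq := Q_pos hx hr h0
      have hs := (S_opt hx).2.1 j hq
      have hEp := hE j r hr h0
      have hσp := hσpos j r hr h0
      have ha := N.a_pos r
      unfold D
      rw [if_pos hq]
      have hl : Real.log ((E j r * N.Q x j) / (σ j * x j r)) ≤
          (E j r * N.Q x j) / (σ j * x j r) - 1 :=
        Real.log_le_sub_one_of_pos (by positivity)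
      rw [Real.log_div (by positivity) (by positivity), Real.log_mul hEp.ne' hq.ne',
        Real.log_mul hσp.ne' h0.ne'] at hl
      rw [Real.log_div hEp.ne' ha.ne', Real.log_div (by positivity) ha.ne',
        Real.log_mul (by positivity) hs.ne', Real.log_div h0.ne' hq.ne']
      have h2 := mul_le_mul_of_nonneg_left hl h0.le
      have e : x j r * (E j r * N.Q x j / (σ j * x j r) - 1) = N.Q x j * (E j r / σ j) - x j r := by
        field_simp
      rw [e] at h2
      nlinarith
  have hj : ∀ j, ∑ r ∈ N.In j, x j r * Real.log (E j r / N.a r) ≤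
      ∑ r ∈ N.In j, x j r * Real.log (N.D x j r / N.a r) +
      (N.Q x j * Real.log (σ j) - N.Q x j * Real.log (N.S (N.Q x) j)) := by
    intro j
    have h1 := Finset.sum_le_sum (pt j)
    rw [Finset.sum_add_distrib, Finset.sum_add_distrib, Finset.sum_sub_distrib,
      Finset.sum_sub_distrib, ← Finset.sum_mul, ← Finset.sum_mul, ← Finset.mul_sum,
      ← Finset.sum_div] at h1
    have e1 : ∑ r ∈ N.In j, x j r = N.Q x j := rfl
    have e2 : ∑ r ∈ N.In j, E j r = σ j := rfl
    rw [e1, e2] at h1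
    have h3 : N.Q x j * (σ j / σ j) ≤ N.Q x j * 1 :=
      mul_le_mul_of_nonneg_left (div_self_le_one _) (Q_nonneg hx j)
    linarith
  have := Finset.sum_le_sum (fun j (_ : j ∈ Finset.univ) => hj j)
  rw [Finset.sum_add_distrib, Finset.sum_sub_distrib] at this
  unfold H
  linarith

lemma H_lower {x : J → R → ℝ} (hx : N.NN x) :
    Real.log (1 + N.ε) * ∑ j, ∑ r ∈ N.In j, x j r ≤ N.H x := by
  have hε := N.hε
  have h := H_ge hx (fun _ r => (1 + N.ε) * N.a r)
    (fun j r _ => mul_nonneg (by linarith) (N.a_pos r).le)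
    (fun j r _ _ => mul_pos (by linarith) (N.a_pos r)) N.aC'
  refine le_trans (le_of_eq ?_) h
  rw [Finset.mul_sum]
  refine Finset.sum_congr rfl (fun j _ => ?_)
  rw [Finset.mul_sum]
  refine Finset.sum_congr rfl (fun r _ => ?_)
  rw [mul_div_assoc, div_self (N.a_pos r).ne', mul_one, mul_comm]

lemma H_upper {x : J → R → ℝ} (hx : N.NN x) :
    N.H x ≤ N.β * ∑ j, ∑ r ∈ N.In j, x j r := by
  rw [Finset.mul_sum]
  refine Finset.sum_le_sum (fun j _ => ?_)
  rw [Finset.mul_sum]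
  refine Finset.sum_le_sum (fun r hr => ?_)
  rw [mul_comm N.β]
  exact mul_le_mul_of_nonneg_left (N.hβ r _ (D_nonneg hx hr) (D_le hx hr)) (hx j r hr)

lemma zero_of_H_nonpos {x : J → R → ℝ} (hx : N.NN x) (h : N.H x ≤ 0) :
    ∀ j, ∀ r ∈ N.In j, x j r = 0 := by
  have h1 := H_lower hx
  have h2 : 0 < Real.log (1 + N.ε) := Real.log_pos (by linarith [N.hε])
  have h3 : ∑ j, ∑ r ∈ N.In j, x j r ≤ 0 := by
    by_contra hc
    push Not at hc
    have := mul_pos h2 hc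
    linarith
  intro j r hr
  have h4 : N.Q x j ≤ ∑ j, N.Q x j :=
    Finset.single_le_sum (f := fun j => N.Q x j) (fun j _ => Q_nonneg hx j) (Finset.mem_univ j)
  have h5 : x j r ≤ N.Q x j :=
    Finset.single_le_sum (f := fun r => x j r) (fun r hr => hx j r hr) hr
  have h6 : ∑ j, N.Q x j ≤ 0 := h3
  linarith [hx j r hr]

/-- lower semicontinuity -/
lemma H_lsc {α : Type} (l : Filter α) {x : J → R → ℝ} (hx : N.NN x) (X : α → J → R → ℝ)
    (hX : ∀ᶠ u in l, N.NN (X u))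
    (hlim : ∀ j, ∀ r ∈ N.In j, Tendsto (fun u => X u j r) l (𝓝 (x j r)))
    (y : ℝ) (hy : y < N.H x) : ∀ᶠ u in l, y < N.H (X u) := by
  set E : ℝ → J → R → ℝ := fun θ j r => (1 - θ) * N.D x j r + θ * N.a r with hE
  have lim1 : Tendsto (fun θ => ∑ j, ∑ r ∈ N.In j, x j r * Real.log (E θ j r / N.a r)) (𝓝[>] 0)
      (𝓝 (N.H x)) := by
    apply tendsto_finsetSum
    intro j _
    apply tendsto_finsetSum
    intro r hr
    rcases (hx j r hr).eq_or_lt with h0 | h0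
    · simp [← h0]
    · apply Tendsto.const_mul
      have hD := D_pos hx hr h0
      apply Tendsto.log _ (div_pos hD (N.a_pos r)).ne'
      apply Tendsto.div_const
      apply tendsto_nhdsWithin_of_tendsto_nhds
      have hc : Continuous (fun θ : ℝ => (1 - θ) * N.D x j r + θ * N.a r) := by fun_prop
      have := hc.tendsto 0
      simpa using this
  have ev := (lim1.eventually (lt_mem_nhds hy)).and
    (Ioo_mem_nhdsGT (show (0:ℝ) < 1 by norm_num))
  obtain ⟨θ, hθ1, hθ2⟩ := ev.exists
  have hEpos : ∀ j, ∀ r ∈ N.In j, 0 < E θ j r := by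
    intro j r hr
    have h1 := mul_nonneg (show 0 ≤ 1 - θ by linarith [hθ2.2]) (D_nonneg hx hr)
    have h2 := mul_pos hθ2.1 (N.a_pos r)
    simp only [hE]; linarith
  have hEC : (fun j => ∑ r ∈ N.In j, E θ j r) ∈ N.C := by
    have h1 := N.conv (S_opt hx).1 N.aC (show 0 ≤ 1 - θ by linarith [hθ2.2]) hθ2.1.le (by ring)
    convert h1 using 1
    funext j
    simp only [hE, Finset.sum_add_distrib, ← Finset.mul_sum, D_sum, Pi.add_apply, Pi.smul_apply,
      smul_eq_mul]
  have lim2 : Tendsto (fun u => ∑ j, ∑ r ∈ N.In j, X u j r * Real.log (E θ j r / N.a r)) l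
      (𝓝 (∑ j, ∑ r ∈ N.In j, x j r * Real.log (E θ j r / N.a r))) := by
    apply tendsto_finsetSum
    intro j _
    apply tendsto_finsetSum
    intro r hr
    exact (hlim j r hr).mul_const _
  filter_upwards [lim2.eventually (lt_mem_nhds hθ1), hX] with u h1 h2
  exact lt_of_lt_of_le h1 (H_ge h2 _ (fun j r hr => (hEpos j r hr).le)
    (fun j r hr _ => hEpos j r hr) hEC)

noncomputable def W (N : NetData J R) (x : J → R → ℝ) (j : J) (r : R) : ℝ :=
  if 0 < x j r then Real.log (N.D x j r / N.a r) else N.β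

lemma D_tendsto {α : Type} (l : Filter α) {x : J → R → ℝ} (hx : N.NN x) (X : α → J → R → ℝ)
    (hX : ∀ᶠ u in l, N.NN (X u))
    (hlim : ∀ j, ∀ r ∈ N.In j, Tendsto (fun u => X u j r) l (𝓝 (x j r)))
    {j : J} {r : R} (hr : r ∈ N.In j) (h0 : 0 < x j r) :
    Tendsto (fun u => N.D (X u) j r) l (𝓝 (N.D x j r)) := by
  have hq := Q_pos hx hr h0
  have hQlim : ∀ j, Tendsto (fun u => N.Q (X u) j) l (𝓝 (N.Q x j)) :=
    fun j => tendsto_finsetSum _ (fun r hr => hlim j r hr)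
  have hS := POpt_tendsto N.conv N.nonneg (Q_nonneg hx) (S_opt hx) l (fun u => N.Q (X u))
    (fun u => N.S (N.Q (X u))) (hX.mono (fun u hu => Q_nonneg hu))
    (hX.mono (fun u hu => S_opt hu)) hQlim j hq
  have h1 := ((hlim j r hr).div (hQlim j) hq.ne').mul hS
  have e : N.D x j r = x j r / N.Q x j * N.S (N.Q x) j := by unfold D; rw [if_pos hq]
  rw [e]
  refine h1.congr' ?_
  filter_upwards [(hQlim j).eventually (lt_mem_nhds hq)] with u hu
  unfold D; rw [if_pos hu]; rfl

/-- upper bound for increments -/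
lemma H_incr {α : Type} (l : Filter α) {x : J → R → ℝ} (hx : N.NN x) (X : α → J → R → ℝ)
    (hX : ∀ᶠ u in l, N.NN (X u))
    (hlim : ∀ j, ∀ r ∈ N.In j, Tendsto (fun u => X u j r) l (𝓝 (x j r))) :
    ∃ w : α → J → R → ℝ, (∀ j, ∀ r ∈ N.In j, Tendsto (fun u => w u j r) l (𝓝 (N.W x j r))) ∧
      ∀ᶠ u in l, N.H (X u) - N.H x ≤ ∑ j, ∑ r ∈ N.In j, (X u j r - x j r) * w u j r := by
  refine ⟨fun u j r => if 0 < x j r then Real.log (N.D (X u) j r / N.a r) else N.β, ?_, ?_⟩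
  · intro j r hr
    unfold W
    dsimp only
    split_ifs with h
    · exact ((D_tendsto l hx X hX hlim hr h).div_const _).log
        (div_pos (D_pos hx hr h) (N.a_pos r)).ne'
    · exact tendsto_const_nhds
  · have hev : ∀ᶠ u in l, ∀ j, ∀ r ∈ N.In j, 0 < x j r → 0 < X u j r := by
      rw [eventually_all]
      intro j
      rw [eventually_all_finset]
      intro r hr
      by_cases h : 0 < x j r
      · filter_upwards [(hlim j r hr).eventually (lt_mem_nhds h)] with u hu _ using hu
      · exact Eventually.of_forall (fun u h' => absurd h' h)
    filter_upwards [hX, hev] with u h1 h2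
    have h3 := H_ge hx (fun j r => N.D (X u) j r) (fun j r hr => D_nonneg h1 hr)
      (fun j r hr h => D_pos h1 hr (h2 j r hr h)) (by
        have := (S_opt h1).1
        convert this using 1
        funext j; exact D_sum j)
    have h4 : N.H (X u) - ∑ j, ∑ r ∈ N.In j, x j r * Real.log (N.D (X u) j r / N.a r) ≤
        ∑ j, ∑ r ∈ N.In j, (X u j r - x j r) *
          (if 0 < x j r then Real.log (N.D (X u) j r / N.a r) else N.β) := by
      unfold H
      rw [← Finset.sum_sub_distrib]
      refine Finset.sum_le_sum (fun j _ => ?_)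
      rw [← Finset.sum_sub_distrib]
      refine Finset.sum_le_sum (fun r hr => ?_)
      split_ifs with h
      · rw [sub_mul]
      · have h0 : x j r = 0 := le_antisymm (not_lt.1 h) (hx j r hr)
        rw [h0]
        simp only [zero_mul, sub_zero]
        exact mul_le_mul_of_nonneg_left (N.hβ r _ (D_nonneg h1 hr) (D_le h1 hr)) (h1 j r hr)
    linarith

/-- finite Dini derivative for Lipschitz paths -/
lemma H_dini_fin {X : ℝ → J → R → ℝ} {t L : ℝ} (hX : ∀ u ≥ t, N.NN (X u))
    (hL : ∀ u ≥ t, ∀ j, ∀ r ∈ N.In j, |X u j r - X t j r| ≤ L * (u - t)) :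
    ∃ m : ℝ, ∀ᶠ u in 𝓝[>] t, N.H (X u) - N.H (X t) ≤ (u - t) * m := by
  have hlim : ∀ j, ∀ r ∈ N.In j, Tendsto (fun u => X u j r) (𝓝[>] t) (𝓝 (X t j r)) := by
    intro j r hr
    rw [tendsto_iff_dist_tendsto_zero]
    have h1 : Tendsto (fun u => L * (u - t)) (𝓝[>] t) (𝓝 0) := by
      apply tendsto_nhdsWithin_of_tendsto_nhds
      have hc : Continuous (fun u : ℝ => L * (u - t)) := by fun_prop
      simpa using hc.tendsto t
    refine squeeze_zero' (Eventually.of_forall (fun u => dist_nonneg)) ?_ h1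
    filter_upwards [self_mem_nhdsWithin] with u hu
    exact hL u (le_of_lt hu) j r hr
  obtain ⟨w, hw1, hw2⟩ := H_incr (𝓝[>] t) (hX t le_rfl) X (by
    filter_upwards [self_mem_nhdsWithin] with u hu using hX u (le_of_lt hu)) hlim
  have hb : ∀ᶠ u in 𝓝[>] t, ∀ j, ∀ r ∈ N.In j, |w u j r| ≤ |N.W (X t) j r| + 1 := by
    rw [eventually_all]
    intro j
    rw [eventually_all_finset]
    intro r hr
    filter_upwards [(hw1 j r hr).abs.eventually (gt_mem_nhds (lt_add_one _))] with u hu using hu.le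
  refine ⟨∑ j, ∑ r ∈ N.In j, L * (|N.W (X t) j r| + 1), ?_⟩
  filter_upwards [hw2, hb, self_mem_nhdsWithin] with u h1 h2 h3
  refine h1.trans ?_
  rw [Finset.mul_sum]
  refine Finset.sum_le_sum (fun j _ => ?_)
  rw [Finset.mul_sum]
  refine Finset.sum_le_sum (fun r hr => ?_)
  have h3' : t < u := h3
  calc (X u j r - X t j r) * w u j r ≤ |X u j r - X t j r| * |w u j r| := by
        rw [← abs_mul]; exact le_abs_self _
    _ ≤ (L * (u - t)) * (|N.W (X t) j r| + 1) := by
        have h5 := hL u h3'.le j r hr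
        have h4 : 0 ≤ L * (u - t) := le_trans (abs_nonneg _) h5
        exact mul_le_mul h5 (h2 j r hr) (abs_nonneg _) h4
    _ = _ := by ring

/-- Dini derivative at points of differentiability -/
lemma H_dini_deriv {X : ℝ → J → R → ℝ} {t : ℝ} (hX : ∀ u ≥ t, N.NN (X u)) (d : J → R → ℝ)
    (hd : ∀ j, ∀ r ∈ N.In j, HasDerivAt (fun u => X u j r) (d j r) t) (c : ℝ)
    (hc : ∑ j, ∑ r ∈ N.In j, d j r * N.W (X t) j r < c) :
    ∀ᶠ u in 𝓝[>] t, N.H (X u) - N.H (X t) ≤ (u - t) * c := by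
  obtain ⟨w, hw1, hw2⟩ := H_incr (𝓝[>] t) (hX t le_rfl) X (by
    filter_upwards [self_mem_nhdsWithin] with u hu using hX u (le_of_lt hu))
    (fun j r hr => tendsto_nhdsWithin_of_tendsto_nhds (hd j r hr).continuousAt)
  have hs : ∀ j, ∀ r ∈ N.In j, Tendsto (fun u => (X u j r - X t j r) / (u - t)) (𝓝[>] t)
      (𝓝 (d j r)) := by
    intro j r hr
    have h1 := (hasDerivAt_iff_tendsto_slope.1 (hd j r hr)).mono_left
      (nhdsWithin_mono t (fun u (hu : t < u) => ne_of_gt hu))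
    refine h1.congr (fun u => ?_)
    rw [slope_def_field]
  have lim : Tendsto (fun u => ∑ j, ∑ r ∈ N.In j, (X u j r - X t j r) / (u - t) * w u j r)
      (𝓝[>] t) (𝓝 (∑ j, ∑ r ∈ N.In j, d j r * N.W (X t) j r)) := by
    apply tendsto_finsetSum
    intro j _
    apply tendsto_finsetSum
    intro r hr
    exact (hs j r hr).mul (hw1 j r hr)
  filter_upwards [lim.eventually (gt_mem_nhds hc), hw2, self_mem_nhdsWithin] with u h1 h2 h3
  have h3' : 0 < u - t := sub_pos.2 h3
  refine h2.trans ?_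
  refine le_trans (le_of_eq ?_) (mul_le_mul_of_nonneg_left h1.le h3'.le)
  rw [Finset.mul_sum]
  refine Finset.sum_congr rfl (fun j _ => ?_)
  rw [Finset.mul_sum]
  refine Finset.sum_congr rfl (fun r hr => ?_)
  field_simp

/-- some link gets service well above its load -/
lemma exists_overserved {q s : J → ℝ} (hq : ∀ j, 0 ≤ q j) (hq1 : ∃ j, 0 < q j)
    (h : POpt N.C q s) : ∃ j, (1 + N.ε) * ∑ r ∈ N.In j, N.a r ≤ s j := by
  by_contra hcon
  push Not at hcon
  have h1 := POpt_foc N.conv N.nonneg hq h N.aC'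
  have h2 : ∑ j, q j < ∑ j, q j * ((∑ r ∈ N.In j, (1 + N.ε) * N.a r) / s j) := by
    have hlt : ∀ j, 0 < q j → q j < q j * ((∑ r ∈ N.In j, (1 + N.ε) * N.a r) / s j) := by
      intro j hj
      have hs := h.2.1 j hj
      rw [← Finset.mul_sum]
      have : 1 < ((1 + N.ε) * ∑ r ∈ N.In j, N.a r) / s j := by
        rw [one_lt_div hs]; exact hcon j
      nlinarith
    obtain ⟨j, hj⟩ := hq1
    refine Finset.sum_lt_sum (fun i _ => ?_) ⟨j, Finset.mem_univ j, hlt j hj⟩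
    rcases (hq i).eq_or_lt with h0 | h0
    · rw [← h0]; simp
    · exact (hlt i h0).le
  linarith

end NetData

lemma sum_reindex {J R : Type} [Fintype J] [Fintype R] (K : R → ℕ) (link : R → ℕ → J)
    (hinj : ∀ r, ∀ k < K r, ∀ l < K r, link r k = link r l → k = l)
    (In : J → Finset R) (hIn : ∀ j r, r ∈ In j ↔ ∃ k < K r, link r k = j) (F : J → R → ℝ) :
    ∑ j, ∑ r ∈ In j, F j r = ∑ r, ∑ k ∈ Finset.range (K r), F (link r k) r := by
  have h1 : ∀ r, ∑ k ∈ Finset.range (K r), F (link r k) r =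
      ∑ j ∈ (Finset.range (K r)).image (link r), F j r := by
    intro r
    rw [Finset.sum_image]
    intro k hk l hl h
    exact hinj r k (by simpa using hk) l (by simpa using hl) h
  simp only [h1]
  apply Finset.sum_comm'
  intro j r
  simp [hIn]

namespace NetData

lemma drift {J R : Type} [Fintype J] [Fintype R] (N : NetData J R)
    (K : R → ℕ) (link : R → ℕ → J) (hK : ∀ r, 1 ≤ K r)
    (hinj : ∀ r, ∀ k < K r, ∀ l < K r, link r k = link r l → k = l)
    (hIn : ∀ j r, r ∈ N.In j ↔ ∃ k < K r, link r k = j) (c : ℝ)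
    (hc : ∀ r, c ≤ N.a r * ((√(1 + N.ε) - 1) ^ 2 / K r))
    (x d φ : J → R → ℝ) (s : J → ℝ) (hx : N.NN x) (hopt : POpt N.C (N.Q x) s)
    (hφ0 : ∀ j r, 0 ≤ φ j r) (hφ1 : ∀ j, ∑ r ∈ N.In j, φ j r = 1)
    (hφ2 : ∀ j, 0 < N.Q x j → ∀ r ∈ N.In j, φ j r = x j r / N.Q x j)
    (hd : ∀ r, ∀ k < K r, d (link r k) r =
      (if k = 0 then N.a r else φ (link r (k - 1)) r * s (link r (k - 1)))
        - φ (link r k) r * s (link r k))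
    (hd0 : ∀ j, ∀ r ∈ N.In j, x j r = 0 → d j r = 0) :
    (∑ j, ∑ r ∈ N.In j, d j r * N.W x j r ≤ 0) ∧
    ((∃ j, ∃ r ∈ N.In j, x j r ≠ 0) → ∑ j, ∑ r ∈ N.In j, d j r * N.W x j r ≤ -c) := by
  have hmem : ∀ r, ∀ k < K r, r ∈ N.In (link r k) := fun r k hk => (hIn _ _).2 ⟨k, hk, rfl⟩
  have hpos : ∀ r, ∀ k < K r, 0 < φ (link r k) r * s (link r k) := by
    intro r k
    induction k with
    | zero =>
      intro hk
      rcases (hx _ r (hmem r 0 hk)).eq_or_lt with h0 | h0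
      · have h1 := hd0 _ r (hmem r 0 hk) h0.symm
        have h2 := hd r 0 hk
        rw [h1, if_pos rfl] at h2
        linarith [N.a_pos r]
      · have hq := Q_pos hx (hmem r 0 hk) h0
        rw [hφ2 _ hq r (hmem r 0 hk)]
        exact mul_pos (div_pos h0 hq) (hopt.2.1 _ hq)
    | succ k ih =>
      intro hk
      rcases (hx _ r (hmem r (k+1) hk)).eq_or_lt with h0 | h0
      · have h1 := hd0 _ r (hmem r (k+1) hk) h0.symm
        have h2 := hd r (k+1) hk
        rw [h1, if_neg (Nat.succ_ne_zero k)] at h2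
        simp only [Nat.add_sub_cancel] at h2
        linarith [ih (by omega)]
      · have hq := Q_pos hx (hmem r (k+1) hk) h0
        rw [hφ2 _ hq r (hmem r (k+1) hk)]
        exact mul_pos (div_pos h0 hq) (hopt.2.1 _ hq)
  set u : R → ℕ → ℝ := fun r k =>
    match k with
    | 0 => 1
    | k + 1 => φ (link r k) r * s (link r k) / N.a r with hu
  have hu0 : ∀ r, u r 0 = 1 := fun r => rfl
  have hu1 : ∀ r k, u r (k+1) = φ (link r k) r * s (link r k) / N.a r := fun r k => rfl
  have hupos : ∀ r, ∀ k ≤ K r, 0 < u r k := by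
    intro r k hk
    cases k with
    | zero => rw [hu0 r]; norm_num
    | succ k => rw [hu1 r k]; exact div_pos (hpos r k hk) (N.a_pos r)
  have hdu : ∀ r, ∀ k < K r, d (link r k) r = N.a r * (u r k - u r (k+1)) := by
    intro r k hk
    have ha := (N.a_pos r).ne'
    rw [hd r k hk]
    cases k with
    | zero => rw [hu0 r, hu1 r 0, if_pos rfl]; field_simp
    | succ k => rw [hu1 r k, hu1 r (k+1), if_neg (Nat.succ_ne_zero k)]; simp only [Nat.add_sub_cancel]; field_simp
  have hterm : ∀ r, ∀ k < K r, d (link r k) r * N.W x (link r k) r =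
      N.a r * ((u r k - u r (k+1)) * Real.log (u r (k+1))) := by
    intro r k hk
    rcases (hx _ r (hmem r k hk)).eq_or_lt with h0 | h0
    · have h1 := hd0 _ r (hmem r k hk) h0.symm
      have h2 := hdu r k hk
      rw [h1] at h2
      rw [h1, ← mul_assoc, ← h2]; simp
    · have hq := Q_pos hx (hmem r k hk) h0
      rw [hdu r k hk, hu1 r k]
      unfold W
      rw [if_pos h0]
      unfold D
      rw [if_pos hq, hφ2 _ hq r (hmem r k hk),
        POpt_unique N.conv N.nonneg (Q_nonneg hx) hopt (S_opt hx) _ hq]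
      ring
  have hsum : ∑ j, ∑ r ∈ N.In j, d j r * N.W x j r =
      ∑ r, N.a r * ∑ k ∈ Finset.range (K r), (u r k - u r (k+1)) * Real.log (u r (k+1)) := by
    rw [sum_reindex K link hinj N.In hIn]
    refine Finset.sum_congr rfl (fun r _ => ?_)
    rw [Finset.mul_sum]
    exact Finset.sum_congr rfl (fun k hk => hterm r k (Finset.mem_range.1 hk))
  have hle : ∀ r, ∑ k ∈ Finset.range (K r), (u r k - u r (k+1)) * Real.log (u r (k+1)) ≤
      - ∑ k ∈ Finset.range (K r), (√(u r k) - √(u r (k+1))) ^ 2 :=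
    fun r => chain_bound (K r) (u r) (hu0 r) (hupos r)
  have hr0 : ∀ r, N.a r * ∑ k ∈ Finset.range (K r), (u r k - u r (k+1)) * Real.log (u r (k+1))
      ≤ 0 := by
    intro r
    apply mul_nonpos_of_nonneg_of_nonpos (N.a_pos r).le
    have : 0 ≤ ∑ k ∈ Finset.range (K r), (√(u r k) - √(u r (k+1))) ^ 2 :=
      Finset.sum_nonneg (fun _ _ => sq_nonneg _)
    linarith [hle r]
  rw [hsum]
  refine ⟨Finset.sum_nonpos (fun r _ => hr0 r), ?_⟩
  rintro ⟨j0, r0, hr0m, hne⟩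
  have hq0 : 0 < N.Q x j0 := Q_pos hx hr0m (lt_of_le_of_ne (hx _ _ hr0m) (Ne.symm hne))
  obtain ⟨j, hj⟩ := exists_overserved (Q_nonneg hx) ⟨j0, hq0⟩ hopt
  have hex : ∃ r ∈ N.In j, (1 + N.ε) * N.a r ≤ φ j r * s j := by
    apply Finset.exists_le_of_sum_le (N.In_ne j)
    rw [← Finset.mul_sum, ← Finset.sum_mul, hφ1 j, one_mul]
    exact hj
  obtain ⟨r, hr, hge⟩ := hex
  obtain ⟨k, hk, rfl⟩ := (hIn _ _).1 hr
  have huk : 1 + N.ε ≤ u r (k+1) := by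
    rw [hu1, le_div_iff₀ (N.a_pos r)]; exact hge
  have hsq := chain_sq (K r) (fun i => √(u r i)) (k+1) hk
  simp only [hu0, Real.sqrt_one] at hsq
  have hε := N.hε
  have h1 : (√(1 + N.ε) - 1) ^ 2 ≤ (√(u r (k+1)) - 1) ^ 2 := by
    have h2 : 1 ≤ √(1 + N.ε) := Real.one_le_sqrt.2 (by linarith)
    have h3 : √(1 + N.ε) ≤ √(u r (k+1)) := Real.sqrt_le_sqrt huk
    exact pow_le_pow_left₀ (by linarith) (by linarith) 2
  have hKpos : (0:ℝ) < K r := by exact_mod_cast hK r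
  have h4 : (√(1 + N.ε) - 1) ^ 2 / K r ≤
      ∑ k ∈ Finset.range (K r), (√(u r k) - √(u r (k+1))) ^ 2 := by
    rw [div_le_iff₀ hKpos, mul_comm]
    exact h1.trans hsq
  calc ∑ r, N.a r * ∑ k ∈ Finset.range (K r), (u r k - u r (k+1)) * Real.log (u r (k+1))
      ≤ N.a r * ∑ k ∈ Finset.range (K r), (u r k - u r (k+1)) * Real.log (u r (k+1)) := by
        rw [← Finset.add_sum_erase _ _ (Finset.mem_univ r)]
        have := Finset.sum_nonpos (fun r' (_ : r' ∈ Finset.univ.erase r) => hr0 r')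
        linarith
    _ ≤ N.a r * (- ((√(1 + N.ε) - 1) ^ 2 / K r)) := by
        apply mul_le_mul_of_nonneg_left _ (N.a_pos r).le
        linarith [hle r]
    _ ≤ -c := by linarith [hc r]

end NetData

lemma NetData_exists {J R : Type} [Fintype J] [Fintype R]
    (In : J → Finset R) (hne : ∀ j, (In j).Nonempty)
    (abar : R → ℝ) (habar_pos : ∀ r, 0 < abar r)
    (C : Set (J → ℝ)) (hC_compact : IsCompact C) (hC_convex : Convex ℝ C)
    (hC_nonneg : ∀ s ∈ C, ∀ j, 0 ≤ s j)
    (hIntr : (fun j => ∑ r ∈ In j, abar r) ∈ interior C) :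
    ∃ N : NetData J R, N.In = In ∧ N.a = abar ∧ N.C = C := by
  have haC := interior_subset hIntr
  have hex : ∃ ε > (0:ℝ), (fun j => ∑ r ∈ In j, (1 + ε) * abar r) ∈ C := by
    have hcont : Continuous (fun ε : ℝ => (fun j => ∑ r ∈ In j, (1 + ε) * abar r : J → ℝ)) := by
      fun_prop
    have h0 : (fun j => ∑ r ∈ In j, (1 + (0:ℝ)) * abar r) ∈ interior C := by
      simpa using hIntr
    have hev := hcont.continuousAt.eventually (isOpen_interior.mem_nhds h0)
    have hev2 : ∀ᶠ ε in 𝓝[>] (0:ℝ), (fun j => ∑ r ∈ In j, (1 + ε) * abar r) ∈ interior C :=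
      nhdsWithin_le_nhds hev
    obtain ⟨ε, h1, h2⟩ := (hev2.and self_mem_nhdsWithin).exists
    exact ⟨ε, h2, interior_subset h1⟩
  obtain ⟨ε, hε, haC'⟩ := hex
  obtain ⟨B0, hB0⟩ := hC_compact.isBounded.exists_norm_le
  have hB : ∀ s ∈ C, ∀ j, s j ≤ B0 := fun s hs j =>
    (le_abs_self _).trans ((norm_le_pi_norm s j).trans (hB0 s hs))
  have hS : ∀ q : J → ℝ, ∃ s, (∀ j, 0 ≤ q j) → POpt C q s := by
    intro q
    by_cases hq : ∀ j, 0 ≤ q j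
    · obtain ⟨s, hs⟩ := POpt_exists hC_compact hC_nonneg _ haC
        (fun j => Finset.sum_pos (fun r _ => habar_pos r) (hne j)) q hq
      exact ⟨s, fun _ => hs⟩
    · exact ⟨0, fun h => absurd h hq⟩
  choose S hS using hS
  have hβ0 : 0 ≤ ∑ r, |Real.log (B0 / abar r)| := Finset.sum_nonneg (fun _ _ => abs_nonneg _)
  exact ⟨{ In := In, a := abar, C := C, S := S, B := B0, β := ∑ r, |Real.log (B0 / abar r)|,
           ε := ε, In_ne := hne, a_pos := habar_pos, conv := hC_convex, nonneg := hC_nonneg,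
           le_B := hB, hβ0 := hβ0
           hβ := by
            intro r D hD hDB
            rcases hD.eq_or_lt with h | h
            · rw [← h]; simpa using hβ0
            · have h1 : Real.log (D / abar r) ≤ Real.log (B0 / abar r) := by
                have ha := habar_pos r
                apply Real.log_le_log (div_pos h ha)
                gcongr
              exact h1.trans ((le_abs_self _).trans
                (Finset.single_le_sum (f := fun r => |Real.log (B0 / abar r)|)
                  (fun _ _ => abs_nonneg _) (Finset.mem_univ r)))
           hε := hε, aC := haC, aC' := haC', hS := hS }, rfl, rfl, rfl⟩

/-- Fluid stability of the Proportional Scheduler in multihop networks with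
fixed routing: there is a time `T > 0`, depending only on the network data,
by which every fluid model solution starting with unit total mass has emptied.
A fluid model solution is a locally absolutely continuous `x` (written as the
integral of a locally (interval-)integrable function `d`), together with
measurable allocations `s(t) ∈ C` and route-shares `φ(t) ∈ [0,1]^E`, such that
almost everywhere: (i) `s(t)` is a proportionally fair allocation for the queue
sizes `q(t)`; (ii) the shares `φ(t)` sum to one at every link and equal
`x_{jr}(t)/q_j(t)` whenever `q_j(t) > 0`; (iii) each coordinate of `x` evolves
as inflow minus outflow, the inflow at the first link of a route being `ā_r`. -/
theorem proportional_scheduler_fluid_stability {J R : Type} [Fintype J] [Fintype R]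
    [Nonempty J] [Nonempty R]
    (K : R → ℕ) (hK : ∀ r, 1 ≤ K r)
    (link : R → ℕ → J)
    (hlink_inj : ∀ r, ∀ k < K r, ∀ l < K r, link r k = link r l → k = l)
    (hcover : ∀ j, ∃ r, ∃ k < K r, link r k = j)
    (abar : R → ℝ) (habar_pos : ∀ r, 0 < abar r)
    (C : Set (J → ℝ)) (hC_compact : IsCompact C) (hC_convex : Convex ℝ C)
    (hC_int : (interior C).Nonempty) (hC_nonneg : ∀ s ∈ C, ∀ j, 0 ≤ s j)
    (habarJ_int :
      (fun j => ∑ r ∈ Finset.univ.filter (fun r => ∃ k < K r, link r k = j), abar r)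
        ∈ interior C) :
    ∃ T > (0 : ℝ), ∀ (x d : ℝ → J → R → ℝ) (s : ℝ → J → ℝ) (φ : ℝ → J → R → ℝ),
      (∀ j r, ∀ t ≥ (0 : ℝ), IntervalIntegrable (fun τ => d τ j r) volume 0 t) →
      (∀ j r, ∀ t ≥ (0 : ℝ), x t j r = x 0 j r + ∫ τ in (0 : ℝ)..t, d τ j r) →
      (∀ t ≥ (0 : ℝ), ∀ r, ∀ k < K r, 0 ≤ x t (link r k) r) →
      (∑ r, ∑ k ∈ Finset.range (K r), x 0 (link r k) r) = 1 →
      Measurable s → Measurable φ →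
      (∀ᵐ t : ℝ, 0 ≤ t →
        -- (i) proportionally fair allocation
        (s t ∈ C ∧ (∀ j, 0 < qOf K link (x t) j → 0 < s t j) ∧
          ∀ s' ∈ C, (∀ j, 0 < qOf K link (x t) j → 0 < s' j) →
            ∑ j ∈ Finset.univ.filter (fun j => 0 < qOf K link (x t) j),
                qOf K link (x t) j * Real.log (s' j)
              ≤ ∑ j ∈ Finset.univ.filter (fun j => 0 < qOf K link (x t) j),
                  qOf K link (x t) j * Real.log (s t j)) ∧
        -- (ii) route shares
        ((∀ j r, 0 ≤ φ t j r ∧ φ t j r ≤ 1) ∧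
          (∀ j, ∑ r ∈ Finset.univ.filter (fun r => ∃ k < K r, link r k = j),
              φ t j r = 1) ∧
          (∀ j, 0 < qOf K link (x t) j →
            ∀ r, (∃ k < K r, link r k = j) →
              φ t j r = x t j r / qOf K link (x t) j)) ∧
        -- (iii) dynamics: inflow minus outflow
        (∀ r, ∀ k < K r,
          d t (link r k) r =
            (if k = 0 then abar r else φ t (link r (k - 1)) r * s t (link r (k - 1)))
              - φ t (link r k) r * s t (link r k))) →
      ∀ t ≥ T, ∀ r, ∀ k < K r, x t (link r k) r = 0 := by
  set In : J → Finset R := fun j => Finset.univ.filter (fun r => ∃ k < K r, link r k = j) with hIndef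
  have hIn : ∀ j r, r ∈ In j ↔ ∃ k < K r, link r k = j := by
    intro j r; simp [hIndef]
  obtain ⟨N, hN1, hN2, hN3⟩ := NetData_exists In
    (fun j => by
      obtain ⟨r, k, hk, h⟩ := hcover j
      exact ⟨r, (hIn j r).2 ⟨k, hk, h⟩⟩)
    abar habar_pos C hC_compact hC_convex hC_nonneg habarJ_int
  have hIn' : ∀ j r, r ∈ N.In j ↔ ∃ k < K r, link r k = j := by rw [hN1]; exact hIn
  -- the drift constant
  have hcex : ∃ c > (0:ℝ), ∀ r, c ≤ N.a r * ((√(1 + N.ε) - 1) ^ 2 / K r) := by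
    obtain ⟨r0, hr0⟩ := Finite.exists_min (fun r => N.a r * ((√(1 + N.ε) - 1) ^ 2 / K r))
    refine ⟨_, ?_, hr0⟩
    have h1 : (1:ℝ) < √(1 + N.ε) := by
      rw [Real.lt_sqrt (by norm_num)]; linarith [N.hε]
    have h2 : (0:ℝ) < K r0 := by exact_mod_cast hK r0
    exact mul_pos (N.a_pos r0) (div_pos (pow_pos (by linarith) 2) h2)
  obtain ⟨c, hc0, hc⟩ := hcex
  have hβ0 := N.hβ0
  have hT : 0 < (N.β + 1) / c := div_pos (by linarith) hc0
  refine ⟨(N.β + 1) / c, hT, ?_⟩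
  intro x d s φ hIntr hx hnn hnorm _ _ hae
  have hNN : ∀ t ≥ (0:ℝ), N.NN (x t) := by
    intro t ht j r hr
    obtain ⟨k, hk, rfl⟩ := (hIn' j r).1 hr
    exact hnn t ht r k hk
  have hQ : ∀ t j, qOf K link (x t) j = N.Q (x t) j := by
    intro t j
    unfold NetData.Q qOf
    rw [hN1]
  simp only [hQ] at hae
  -- Lipschitz bound
  set L : ℝ := N.B + ∑ r, abar r with hL
  have hdb : ∀ᵐ t : ℝ, 0 ≤ t → ∀ j, ∀ r ∈ N.In j, |d t j r| ≤ L := by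
    filter_upwards [hae] with t ht h0 j r hr
    obtain ⟨⟨hs1, _, _⟩, ⟨hφ, _, _⟩, hd⟩ := ht h0
    obtain ⟨k, hk, rfl⟩ := (hIn' j r).1 hr
    have har : abar r ≤ ∑ r, abar r :=
      Finset.single_le_sum (f := abar) (fun r _ => (habar_pos r).le) (Finset.mem_univ r)
    have hap := habar_pos r
    have hb : ∀ j, 0 ≤ φ t j r * s t j ∧ φ t j r * s t j ≤ N.B := by
      intro j
      have h1 := hC_nonneg _ hs1 j
      have h2 := N.le_B (s t) (by rw [hN3]; exact hs1) j
      refine ⟨mul_nonneg (hφ j r).1 h1, ?_⟩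
      calc φ t j r * s t j ≤ 1 * s t j := mul_le_mul_of_nonneg_right (hφ j r).2 h1
        _ ≤ N.B := by linarith
    rw [hd r k hk, abs_le]
    have hb1 := hb (link r k)
    have hb2 := hb (link r (k-1))
    split_ifs <;> constructor <;> linarith
  have hdiff : ∀ t ≥ (0:ℝ), ∀ u ≥ t, ∀ j r, x u j r - x t j r = ∫ τ in t..u, d τ j r := by
    intro t ht u hu j r
    rw [hx j r u (le_trans ht hu), hx j r t ht,
      ← intervalIntegral.integral_add_adjacent_intervals (hIntr j r t ht)
        ((hIntr j r t ht).symm.trans (hIntr j r u (le_trans ht hu)))]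
    ring
  have hLip : ∀ t ≥ (0:ℝ), ∀ u ≥ t, ∀ j, ∀ r ∈ N.In j, |x u j r - x t j r| ≤ L * (u - t) := by
    intro t ht u hu j r hr
    rw [hdiff t ht u hu j r]
    have h1 := intervalIntegral.norm_integral_le_of_norm_le_const_ae (a := t) (b := u) (C := L)
      (f := fun τ => d τ j r) (by
        filter_upwards [hdb] with τ h1 h2
        rw [Set.uIoc_of_le hu] at h2
        exact h1 (le_trans ht h2.1.le) j r hr)
    rw [abs_of_nonneg (sub_nonneg.2 hu)] at h1
    exact h1
  -- differentiability
  have hder : ∀ᵐ t : ℝ, 0 < t → ∀ j r, HasDerivAt (fun u => x u j r) (d t j r) t := by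
    have h1 : ∀ᵐ t : ℝ, ∀ n : ℕ, ∀ j r, t ∈ Set.uIcc (0:ℝ) n → ∀ c ∈ Set.uIcc (0:ℝ) n,
        HasDerivAt (fun u => ∫ τ in c..u, d τ j r) (d t j r) t := by
      rw [ae_all_iff]; intro n
      rw [ae_all_iff]; intro j
      rw [ae_all_iff]; intro r
      exact (hIntr j r n (Nat.cast_nonneg n)).ae_hasDerivAt_integral
    filter_upwards [h1] with t ht h0 j r
    obtain ⟨n, hn⟩ := exists_nat_gt t
    have h2 := ht n j r (by rw [Set.uIcc_of_le (by linarith)]; exact ⟨h0.le, hn.le⟩) 0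
      Set.left_mem_uIcc
    refine (h2.const_add (x 0 j r)).congr_of_eventuallyEq ?_
    filter_upwards [lt_mem_nhds h0] with u hu
    exact hx j r u hu.le
  -- the drift
  have hdrift : ∀ᵐ t : ℝ, 0 < t →
      (∀ j, ∀ r ∈ N.In j, HasDerivAt (fun u => x u j r) (d t j r) t) ∧
      (∑ j, ∑ r ∈ N.In j, d t j r * N.W (x t) j r ≤ 0) ∧
      ((∃ j, ∃ r ∈ N.In j, x t j r ≠ 0) →
        ∑ j, ∑ r ∈ N.In j, d t j r * N.W (x t) j r ≤ -c) := by
    filter_upwards [hae, hder] with t h1 h2 h0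
    refine ⟨fun j r _ => h2 h0 j r, ?_⟩
    obtain ⟨⟨hs1, hs2, hs3⟩, ⟨hφ, hφ1, hφ2⟩, hd⟩ := h1 h0.le
    have hq0 := NetData.Q_nonneg (hNN t h0.le)
    have hfs : ∀ v : J → ℝ, ∑ j ∈ Finset.univ.filter (fun j => 0 < N.Q (x t) j),
        N.Q (x t) j * Real.log (v j) = ∑ j, N.Q (x t) j * Real.log (v j) := by
      intro v
      apply Finset.sum_filter_of_ne
      intro j _ hj
      refine lt_of_le_of_ne (hq0 j) (fun h => hj ?_)
      rw [← h, zero_mul]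
    refine NetData.drift N K link hK hlink_inj hIn' c hc (x t) (d t) (φ t) (s t) (hNN t h0.le)
      ⟨by rw [hN3]; exact hs1, hs2, ?_⟩ (fun j r => (hφ j r).1) ?_ ?_ ?_ ?_
    · intro s' hs' hp
      rw [hN3] at hs'
      have := hs3 s' hs' hp
      rwa [hfs, hfs] at this
    · rw [hN1]; exact hφ1
    · intro j hj r hr
      exact hφ2 j hj r ((hIn' j r).1 hr)
    · rw [hN2]; exact hd
    · intro j r hr hz
      have hmin : IsLocalMin (fun u => x u j r) t := by
        filter_upwards [lt_mem_nhds h0] with u hu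
        have h4 := hNN u hu.le j r hr
        rw [hz]; exact h4
      exact hmin.hasDerivAt_eq_zero (h2 h0 j r)
  -- Lyapunov function
  set g : ℝ → ℝ := fun t => N.H (x t) with hg
  have hlsc : ∀ a ≥ (0:ℝ), ∀ b, LowerSemicontinuousOn g (Set.Icc a b) := by
    intro a ha b t ht y hy
    refine NetData.H_lsc (𝓝[Set.Icc a b] t) (hNN t (le_trans ha ht.1)) x ?_ ?_ y hy
    · filter_upwards [self_mem_nhdsWithin] with u hu using hNN u (le_trans ha hu.1)
    · intro j r hr
      rw [tendsto_iff_dist_tendsto_zero]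
      have h1 : Tendsto (fun u => L * |u - t|) (𝓝[Set.Icc a b] t) (𝓝 0) := by
        apply tendsto_nhdsWithin_of_tendsto_nhds
        have hc : Continuous (fun u : ℝ => L * |u - t|) := by fun_prop
        simpa using hc.tendsto t
      refine squeeze_zero' (Eventually.of_forall (fun u => dist_nonneg)) ?_ h1
      filter_upwards [self_mem_nhdsWithin] with u hu
      rw [Real.dist_eq]
      rcases le_total t u with h | h
      · rw [abs_of_nonneg (sub_nonneg.2 h)]
        exact hLip t (le_trans ha ht.1) u h j r hr
      · rw [abs_sub_comm, abs_sub_comm u t, abs_of_nonneg (sub_nonneg.2 h)]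
        exact hLip u (le_trans ha hu.1) t h j r hr
  have hfin : ∀ t ≥ (0:ℝ), ∃ m : ℝ, ∀ᶠ u in 𝓝[>] t, g u - g t ≤ (u - t) * m := by
    intro t ht
    exact NetData.H_dini_fin (fun u hu => hNN u (le_trans ht hu)) (hLip t ht)
  have hne0 : ∀ᵐ t : ℝ, t ≠ 0 := by simp [ae_iff, measure_singleton]
  have hmono : ∀ a ≥ (0:ℝ), ∀ b ≥ a, g b ≤ g a := by
    intro a ha b hab
    have := dini_bound (c := 0) hab (hlsc a ha b) (fun t ht => hfin t (le_trans ha ht.1)) (by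
      filter_upwards [hdrift, hne0] with t h1 h2 ht c' hc'
      have ht0 : 0 ≤ t := le_trans ha ht.1
      obtain ⟨h3, h4, _⟩ := h1 (lt_of_le_of_ne ht0 (Ne.symm h2))
      exact NetData.H_dini_deriv (fun u hu => hNN u (le_trans ht0 hu)) (d t) h3 c'
        (lt_of_le_of_lt h4 hc'))
    linarith
  have hex : ∃ t0, 0 ≤ t0 ∧ t0 ≤ (N.β + 1) / c ∧ ∀ j, ∀ r ∈ N.In j, x t0 j r = 0 := by
    by_contra hcon
    push Not at hcon
    have h1 := dini_bound (c := -c) hT.le (hlsc 0 le_rfl _) (fun t ht => hfin t ht.1) (by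
      filter_upwards [hdrift, hne0] with t h1 h2 ht c' hc'
      obtain ⟨h3, _, h4⟩ := h1 (lt_of_le_of_ne ht.1 (Ne.symm h2))
      exact NetData.H_dini_deriv (fun u hu => hNN u (le_trans ht.1 hu)) (d t) h3 c'
        (lt_of_le_of_lt (h4 (hcon t ht.1 ht.2.le)) hc'))
    have h2 : g 0 ≤ N.β := by
      have h3 := NetData.H_upper (hNN 0 le_rfl)
      rw [sum_reindex K link hlink_inj N.In hIn', hnorm, mul_one] at h3
      exact h3
    have h4 : ((N.β + 1) / c - 0) * -c = -(N.β + 1) := by field_simp; ring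
    rw [h4] at h1
    have h5 := NetData.zero_of_H_nonpos (hNN _ hT.le)
      (show N.H (x ((N.β + 1) / c)) ≤ 0 by
        have : g ((N.β + 1) / c) ≤ 0 := by linarith
        exact this)
    obtain ⟨j, r, hr, hne⟩ := hcon _ hT.le le_rfl
    exact hne (h5 j r hr)
  obtain ⟨t0, ht0, ht0T, hz⟩ := hex
  intro t ht r k hk
  have h1 : g t0 ≤ 0 := by
    have h3 := NetData.H_upper (hNN t0 ht0)
    rw [Finset.sum_eq_zero (fun j _ => Finset.sum_eq_zero (fun r hr => hz j r hr)), mul_zero] at h3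
    exact h3
  have h2 : g t ≤ g t0 := hmono t0 ht0 t (le_trans ht0T ht)
  exact NetData.zero_of_H_nonpos (hNN t (le_trans ht0 (le_trans ht0T ht))) (h2.trans h1) _ r
    ((hIn' _ _).2 ⟨k, hk, rfl⟩)
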